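/- Let G be a finite group, U a free ℝ[G]-module with ℝ[G]-basis u_1,…,u_q carrying a non-degenerate G-invariant real-valued symmetric bilinear form σ, and W a finite-dimensional complex representation of G with a non-degenerate G-invariant alternating bilinear form κ; let {w_1,…,w_{2N}} be a hyperbolic basis of (W,κ) ordered as w_1, w_1', …, w_N, w_N'. Let E = (U ⊗_ℝ W)^G with the diagonal G-action, and let β be the restriction of σ ⊗ κ to E; β is a non-degenerate alternating form on E, and dim_ℂ E = 2qN. Let T be the ℂ-linear endomorphism of W^q given by the q×q matrix (σ̃(u_i,u_j))_{i,j} with σ̃(u,u') = ∑_{g∈G} σ(gu,u')g^{-1}; T is self-adjoint with respect to the orthogonal sum form κ^{(q)}, and let B be any automorphism of W^q with κ^{(q)}(|G|^{-1}Tx, y) = κ^{(q)}(Bx, By) for all x,y. Then for any hyperbolic basis {e_1,e_1',…,e_{qN},e_{qN}'} of (E,β), the equality ∧_{i=1}^{q} ∧_{n=1}^{2N} |G|^{-1} r_G(u_i ⊗ w_n) = det(B) · (e_1 ∧ e_1' ∧ ⋯ ∧ e_{qN} ∧ e_{qN}') holds in ⋀^{2qN} E, the wedge on the left taken in lexicographic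 order of (i,n). (That is, Pf_{(σ⊗κ)^G}(∧_{i,n} |G|^{-1} r_G(u_i ⊗ w_n)) = pf_{κ^{(q)}}(|G|^{-1} T).) -/

import Mathlib

open scoped TensorProduct

/-- Interleaving of two families `u u' : Fin n → V` into the family
`u 0, u' 0, u 1, u' 1, …` indexed by `Fin (2 * n)`. -/
def interleave {V : Type*} {n : ℕ} (u u' : Fin n → V) : Fin (2 * n) → V :=
  fun k =>
    if k.val % 2 = 0 then u ⟨k.val / 2, by have := k.isLt; omega⟩
    else u' ⟨k.val / 2, by have := k.isLt; omega⟩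

/-- `{u 0, u' 0, …, u (n-1), u' (n-1)}` is a hyperbolic basis of `V` with respect to the
bilinear form `h`. -/
def IsHyperbolicBasis {K V : Type*} [Field K] [AddCommGroup V] [Module K V] {n : ℕ}
    (h : LinearMap.BilinForm K V) (u u' : Fin n → V) : Prop :=
  LinearIndependent K (interleave u u') ∧
  Submodule.span K (Set.range (interleave u u')) = ⊤ ∧
  (∀ i j, h (u i) (u j) = 0) ∧
  (∀ i j, h (u' i) (u' j) = 0) ∧
  (∀ i j, h (u i) (u' j) = if i = j then 1 else 0)

/-- The complex subspace of invariants of the diagonal action on `W ⊗[ℝ] M`. -/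
def diagInvariantsC {G W M : Type*} [Group G]
    [AddCommGroup W] [Module ℂ W] [AddCommGroup M] [Module ℝ M]
    (ρW : Representation ℂ G W) (ρM : Representation ℝ G M) :
    Submodule ℂ (W ⊗[ℝ] M) where
  carrier := {x | ∀ g : G, TensorProduct.map ((ρW g).restrictScalars ℝ) (ρM g) x = x}
  add_mem' := by
    intro a b ha hb g
    rw [map_add, ha g, hb g]
  zero_mem' := by intro g; simp
  smul_mem' := by
    intro c x hx g
    have h : ∀ y : W ⊗[ℝ] M,
        TensorProduct.map ((ρW g).restrictScalars ℝ) (ρM g) (c • y)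
          = c • TensorProduct.map ((ρW g).restrictScalars ℝ) (ρM g) y := by
      intro y
      induction y using TensorProduct.induction_on with
      | zero => simp
      | tmul w m =>
          rw [TensorProduct.smul_tmul', TensorProduct.map_tmul, TensorProduct.map_tmul,
            TensorProduct.smul_tmul']
          simp
      | add a b ha hb => rw [smul_add, map_add, ha, hb, map_add, smul_add]
    rw [h, hx g]

/-- The restriction of the form `κ ⊗ σ` to the invariants `E = (W ⊗_ℝ U)^G`. -/
noncomputable def betaE {G W U : Type*} [Group G]
    [AddCommGroup W] [Module ℂ W] [AddCommGroup U] [Module ℝ U]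
    (ρW : Representation ℂ G W) (ρU : Representation ℝ G U)
    (κ : LinearMap.BilinForm ℂ W) (σ : LinearMap.BilinForm ℝ U) :
    LinearMap.BilinForm ℂ (diagInvariantsC ρW ρU) :=
  (LinearMap.BilinForm.tmul κ σ).compl₁₂
    (diagInvariantsC ρW ρU).subtype (diagInvariantsC ρW ρU).subtype

/-! The averaging map `Φ : v ↦ |G|⁻¹ r_G (∑ i, v i ⊗ u i)` from `W^q` onto `E = (W ⊗ U)^G` pulls
`β` back to the form `κ^{(q)} (|G|⁻¹ T x, y) = κ^{(q)} (B x, B y)`, so `Φ = Ψ ∘ B` for an isometry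
`Ψ : (W^q, κ^{(q)}) ≃ (E, β)`. The isometry carries the hyperbolic basis of `W^q` built from the
`w_n` to a hyperbolic basis of `E`, and hyperbolic bases differ by symplectic matrices, which have
determinant `1`. Hence the wedge of the images under `Φ = Ψ ∘ B`, which are the vectors
`|G|⁻¹ r_G (u i ⊗ w_n)`, is `det B` times the wedge of any hyperbolic basis of `E`. -/

section Interleave

variable {V : Type*} {n q : ℕ}

/-- The reordering `i ↦ 2 i`, `i' ↦ 2 i + 1` underlying `interleave`: it passes between the order
`u 0, …, u (n-1), u' 0, …, u' (n-1)` of symplectic matrices and `u 0, u' 0, u 1, u' 1, …`. -/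
def interleaveEquiv (n : ℕ) : Fin n ⊕ Fin n ≃ Fin (2 * n) where
  toFun := Sum.elim (fun i => ⟨2 * i, by omega⟩) (fun i => ⟨2 * i + 1, by omega⟩)
  invFun := interleave Sum.inl Sum.inr
  left_inv := by
    rintro (i | i)
    · simp [interleave]
    · simp [interleave, Nat.add_mod, Nat.add_div]
  right_inv k := by
    unfold interleave
    split_ifs <;> ext <;> simp only [Sum.elim_inl, Sum.elim_inr] <;> omega

theorem interleave_eq_elim_comp (u u' : Fin n → V) :
    interleave u u' = Sum.elim u u' ∘ (interleaveEquiv n).symm := by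
  funext k
  change _ = Sum.elim u u' (interleave Sum.inl Sum.inr k)
  unfold interleave
  split_ifs <;> rfl

theorem comp_interleave {V' : Type*} (f : V → V') (u u' : Fin n → V) :
    f ∘ interleave u u' = interleave (f ∘ u) (f ∘ u') := by
  rw [interleave_eq_elim_comp, interleave_eq_elim_comp, ← Function.comp_assoc, Sum.comp_elim]

/-- The lexicographic enumeration of `q` blocks of length `2 * n`. -/
def blockEquiv (q n : ℕ) : Fin q × Fin (2 * n) ≃ Fin (2 * (q * n)) :=
  finProdFinEquiv.trans (finCongr (Nat.mul_left_comm q 2 n))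

theorem interleave_blockEquiv (u u' : Fin q × Fin n → V) (p : Fin q × Fin (2 * n)) :
    interleave (u ∘ finProdFinEquiv.symm) (u' ∘ finProdFinEquiv.symm) (blockEquiv q n p) =
      interleave (fun j => u (p.1, j)) (fun j => u' (p.1, j)) p.2 := by
  obtain ⟨i, m⟩ := p
  have hval : (blockEquiv q n (i, m)).val = m + 2 * (n * i) := by
    simp [blockEquiv, finProdFinEquiv, mul_assoc]
  have hmod : (blockEquiv q n (i, m)).val % 2 = m.val % 2 := by omega
  have hdiv : (⟨(blockEquiv q n (i, m)).val / 2, by omega⟩ : Fin (q * n)) =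
      finProdFinEquiv (i, ⟨m / 2, by omega⟩) := by
    ext
    simp only [finProdFinEquiv_apply_val]
    omega
  simp only [interleave, hmod, hdiv, Function.comp_apply, Equiv.symm_apply_apply]

/-- The copies of a family `w` in the `q` summands of `V^q`, in lexicographic order. -/
def blockSingle [Zero V] (q : ℕ) (w : Fin n → V) (k : Fin (q * n)) : Fin q → V :=
  Pi.single (finProdFinEquiv.symm k).1 (w (finProdFinEquiv.symm k).2)

theorem interleave_blockSingle_blockEquiv [Zero V] (w w' : Fin n → V) (i : Fin q)
    (m : Fin (2 * n)) :
    interleave (blockSingle q w) (blockSingle q w') (blockEquiv q n (i, m)) =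
      Pi.single i (interleave w w' m) := by
  let single (w : Fin n → V) (p : Fin q × Fin n) : Fin q → V := Pi.single p.1 (w p.2)
  calc interleave (blockSingle q w) (blockSingle q w') (blockEquiv q n (i, m))
      = interleave (fun j => single w (i, j)) (fun j => single w' (i, j)) m :=
        interleave_blockEquiv (single w) (single w') (i, m)
    _ = Pi.single i (interleave w w' m) :=
        (congr_fun (comp_interleave (Pi.single (M := fun _ : Fin q => V) i) w w') m).symm

theorem prod_ofFn_blockEquiv {A : Type*} [Monoid A] (f : Fin q × Fin (2 * n) → A) :
    (List.ofFn fun i => (List.ofFn fun m => f (i, m)).prod).prod =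
      (List.ofFn (f ∘ (blockEquiv q n).symm)).prod := by
  have hcast : List.ofFn (f ∘ (blockEquiv q n).symm) = List.ofFn (f ∘ finProdFinEquiv.symm) :=
    (List.ofFn_congr (Nat.mul_left_comm q 2 n) (f ∘ finProdFinEquiv.symm)).symm
  rw [hcast, List.ofFn_mul, List.prod_flatten, List.map_ofFn]
  congr 2
  funext i
  congr 2
  funext m
  have hpos : (⟨i * (2 * n) + m, by
      calc i * (2 * n) + m < (i + 1) * (2 * n) := by grind
        _ ≤ q * (2 * n) := Nat.mul_le_mul_right _ i.isLt⟩ : Fin (q * (2 * n))) =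
      finProdFinEquiv (i, m) :=
    Fin.ext (by simp [finProdFinEquiv, add_comm, mul_comm])
  simp [hpos]

end Interleave

theorem alternatingMap_apply_eq_det_smul {R M P ι : Type*} [CommRing R] [AddCommGroup M]
    [Module R M] [AddCommGroup P] [Module R P] [Fintype ι] [DecidableEq ι]
    (b : Module.Basis ι R M) (f : M [⋀^ι]→ₗ[R] P) (v : ι → M) :
    f v = b.det v • f b := by
  suffices f = (LinearMap.toSpanSingleton R P (f b)).compAlternatingMap b.det from
    DFunLike.congr_fun this v
  refine Module.Basis.ext_alternating b fun s hs => ?_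
  let π : Equiv.Perm ι := Equiv.ofBijective s (Finite.injective_iff_bijective.1 hs)
  change f (b ∘ π) = (LinearMap.toSpanSingleton R P (f b)).compAlternatingMap b.det (b ∘ π)
  simp [AlternatingMap.map_perm, Module.Basis.det_self]

theorem exists_isometry_of_surjective {R V V' : Type*} [CommRing R] [AddCommGroup V] [Module R V]
    [AddCommGroup V'] [Module R V'] {h : LinearMap.BilinForm R V} (hh : h.SeparatingLeft)
    {h' : LinearMap.BilinForm R V'} {Φ : V →ₗ[R] V'} (hΦsurj : Function.Surjective Φ)
    (B : V ≃ₗ[R] V) (hΦ : ∀ x y, h' (Φ x) (Φ y) = h (B x) (B y)) :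
    ∃ Ψ : V ≃ₗ[R] V', (∀ x, Ψ (B x) = Φ x) ∧ ∀ x y, h' (Ψ x) (Ψ y) = h x y := by
  have hΦinj : Function.Injective Φ := by
    refine (injective_iff_map_eq_zero Φ).2 fun x hx => B.map_eq_zero_iff.1 ?_
    refine hh _ fun y => ?_
    rw [← B.apply_symm_apply y, ← hΦ, hx, map_zero, LinearMap.zero_apply]
  exact ⟨B.symm.trans (LinearEquiv.ofBijective Φ ⟨hΦinj, hΦsurj⟩),
    fun x => congrArg Φ (B.symm_apply_apply x),
    fun x y => (hΦ _ _).trans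
      (congrArg₂ (h · ·) (B.apply_symm_apply x) (B.apply_symm_apply y))⟩

section HyperbolicBasis

variable {K V V' : Type*} [Field K] [AddCommGroup V] [Module K V] [AddCommGroup V'] [Module K V']
  {n : ℕ} {h : LinearMap.BilinForm K V} {e e' d d' : Fin n → V}

theorem isHyperbolicBasis_of_basis (b : Module.Basis (Fin (2 * n)) K V)
    (hb : ⇑b = interleave e e') (he : ∀ i j, h (e i) (e j) = 0)
    (he' : ∀ i j, h (e' i) (e' j) = 0) (hee' : ∀ i j, h (e i) (e' j) = if i = j then 1 else 0) :
    IsHyperbolicBasis h e e' :=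
  ⟨hb ▸ b.linearIndependent, hb ▸ b.span_eq, he, he', hee'⟩

namespace IsHyperbolicBasis

/-- The basis `e 0, e' 0, e 1, e' 1, …` underlying a hyperbolic basis. -/
noncomputable def basis (he : IsHyperbolicBasis h e e') : Module.Basis (Fin (2 * n)) K V :=
  Module.Basis.mk he.1 he.2.1.ge

theorem coe_basis (he : IsHyperbolicBasis h e e') : ⇑he.basis = interleave e e' :=
  Module.Basis.coe_mk _ _

/-- The basis underlying a hyperbolic basis, in the order `e 0, …, e (n-1), e' 0, …, e' (n-1)` in
which the Gram matrix of the form is `-Matrix.J`. -/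
noncomputable def symplecticBasis (he : IsHyperbolicBasis h e e') :
    Module.Basis (Fin n ⊕ Fin n) K V :=
  he.basis.reindex (interleaveEquiv n).symm

theorem coe_symplecticBasis (he : IsHyperbolicBasis h e e') :
    ⇑he.symplecticBasis = Sum.elim e e' := by
  rw [symplecticBasis, Module.Basis.coe_reindex, coe_basis, interleave_eq_elim_comp]
  simp [Function.comp_assoc]

theorem finrank_eq (he : IsHyperbolicBasis h e e') : Module.finrank K V = 2 * n := by
  rw [Module.finrank_eq_card_basis he.basis, Fintype.card_fin]

theorem toMatrix_symplecticBasis (hh : h.IsAlt) (he : IsHyperbolicBasis h e e') :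
    LinearMap.BilinForm.toMatrix he.symplecticBasis h = -Matrix.J (Fin n) K := by
  have hsymm (i j) : h (e' i) (e j) = -(if i = j then 1 else 0) := by
    rw [← hh.neg_eq (e j) (e' i), he.2.2.2.2]
    simp only [eq_comm]
  ext (i | i) (j | j) <;>
    simp [LinearMap.BilinForm.toMatrix_apply, coe_symplecticBasis, Matrix.J, Matrix.one_apply,
      he.2.2.1, he.2.2.2.1, he.2.2.2.2, hsymm]

theorem nondegenerate (hh : h.IsAlt) (he : IsHyperbolicBasis h e e') : h.Nondegenerate := by
  refine LinearMap.BilinForm.nondegenerate_of_det_ne_zero h he.symplecticBasis ?_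
  rw [he.toMatrix_symplecticBasis hh, ← Matrix.J_transpose, Matrix.det_transpose]
  exact (Matrix.isUnit_det_J _ _).ne_zero

theorem det_interleave_eq_one (hh : h.IsAlt) (hd : IsHyperbolicBasis h d d')
    (he : IsHyperbolicBasis h e e') : hd.basis.det (interleave e e') = 1 := by
  have hsymplectic : hd.symplecticBasis.toMatrix he.symplecticBasis ∈
      Matrix.symplecticGroup (Fin n) K := by
    rw [← SymplecticGroup.transpose_mem_iff, SymplecticGroup.mem_iff, Matrix.transpose_transpose,
      ← neg_inj, ← Matrix.neg_mul, ← Matrix.mul_neg, ← hd.toMatrix_symplecticBasis hh,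
      LinearMap.BilinForm.toMatrix_mul_basis_toMatrix, he.toMatrix_symplecticBasis hh,
      hd.toMatrix_symplecticBasis hh]
  rw [interleave_eq_elim_comp, ← he.coe_symplecticBasis, ← Module.Basis.det_reindex,
    Module.Basis.det_apply]
  exact SymplecticGroup.det_eq_one hsymplectic

theorem alternatingMap_eq {P : Type*} [AddCommGroup P] [Module K P] (hh : h.IsAlt)
    (hd : IsHyperbolicBasis h d d') (he : IsHyperbolicBasis h e e')
    (f : V [⋀^Fin (2 * n)]→ₗ[K] P) : f (interleave d d') = f (interleave e e') := by
  rw [alternatingMap_apply_eq_det_smul hd.basis f (interleave e e'),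
    hd.det_interleave_eq_one hh he, one_smul, hd.coe_basis]

theorem map {h' : LinearMap.BilinForm K V'} (he : IsHyperbolicBasis h e e') (Ψ : V ≃ₗ[K] V')
    (hΨ : ∀ x y, h' (Ψ x) (Ψ y) = h x y) : IsHyperbolicBasis h' (Ψ ∘ e) (Ψ ∘ e') := by
  refine isHyperbolicBasis_of_basis (he.basis.map Ψ) ?_ ?_ ?_ ?_
  · rw [← comp_interleave, ← he.coe_basis]
    rfl
  all_goals
    intro i j
    simp only [Function.comp_apply, hΨ, he.2.2.1, he.2.2.2.1, he.2.2.2.2]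

theorem alternatingMap_isometry_comp {P : Type*} [AddCommGroup P] [Module K P]
    {h' : LinearMap.BilinForm K V'} (hh' : h'.IsAlt) (hd : IsHyperbolicBasis h d d')
    {e e' : Fin n → V'} (he : IsHyperbolicBasis h' e e') {Ψ : V ≃ₗ[K] V'}
    (hΨ : ∀ x y, h' (Ψ x) (Ψ y) = h x y) (B : V →ₗ[K] V)
    (f : V' [⋀^Fin (2 * n)]→ₗ[K] P) :
    f (Ψ ∘ B ∘ interleave d d') = LinearMap.det B • f (interleave e e') := by
  calc f (Ψ ∘ B ∘ interleave d d')
      = f.compLinearMap Ψ (B ∘ hd.basis) := by rw [hd.coe_basis]; rfl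
    _ = LinearMap.det B • f.compLinearMap Ψ hd.basis := by
        rw [alternatingMap_apply_eq_det_smul hd.basis, Module.Basis.det_comp,
          Module.Basis.det_self, mul_one]
    _ = LinearMap.det B • f (interleave (Ψ ∘ d) (Ψ ∘ d')) := by
        rw [hd.coe_basis, ← comp_interleave]; rfl
    _ = LinearMap.det B • f (interleave e e') := by
        rw [(hd.map Ψ hΨ).alternatingMap_eq hh' he]

end IsHyperbolicBasis

end HyperbolicBasis

section PiForm

variable {R M ι : Type*} [CommRing R] [AddCommGroup M] [Module R M] [Fintype ι]

variable (ι) in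
/-- The orthogonal direct sum `κ^{(q)}` of copies of a bilinear form, indexed by `ι`. -/
def piForm (κ : LinearMap.BilinForm R M) : LinearMap.BilinForm R (ι → M) :=
  ∑ i, κ.compl₁₂ (LinearMap.proj i) (LinearMap.proj i)

theorem piForm_apply (κ : LinearMap.BilinForm R M) (x y : ι → M) :
    piForm ι κ x y = ∑ i, κ (x i) (y i) := by
  simp [piForm]

theorem isAlt_piForm {κ : LinearMap.BilinForm R M} (hκ : κ.IsAlt) : (piForm ι κ).IsAlt :=
  fun x => by simp [piForm_apply, hκ.self_eq_zero]

theorem piForm_single_single [DecidableEq ι] (κ : LinearMap.BilinForm R M) (i j : ι) (x y : M) :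
    piForm ι κ (Pi.single i x) (Pi.single j y) = if i = j then κ x y else 0 := by
  rw [piForm_apply, Finset.sum_eq_single_of_mem i (Finset.mem_univ i)]
  · split_ifs with hij
    · simp [hij]
    · simp [Pi.single_eq_of_ne hij]
  · intro k _ hk
    simp [Pi.single_eq_of_ne hk]

theorem piForm_blockSingle_blockSingle (κ : LinearMap.BilinForm R M) {q n : ℕ} (w w' : Fin n → M)
    (k l : Fin (q * n)) :
    piForm (Fin q) κ (blockSingle q w k) (blockSingle q w' l) =
      if (finProdFinEquiv.symm k).1 = (finProdFinEquiv.symm l).1 then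
        κ (w (finProdFinEquiv.symm k).2) (w' (finProdFinEquiv.symm l).2) else 0 :=
  piForm_single_single _ _ _ _ _

theorem IsHyperbolicBasis.pi {K W : Type*} [Field K] [AddCommGroup W] [Module K W] {n : ℕ}
    {κ : LinearMap.BilinForm K W} {w w' : Fin n → W} (hw : IsHyperbolicBasis κ w w') (q : ℕ) :
    IsHyperbolicBasis (piForm (Fin q) κ) (blockSingle q w) (blockSingle q w') := by
  refine isHyperbolicBasis_of_basis ((Pi.basis fun _ : Fin q => hw.basis).reindex
    ((Equiv.sigmaEquivProd _ _).trans (blockEquiv q n))) ?_ ?_ ?_ ?_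
  · funext k
    obtain ⟨⟨i, m⟩, rfl⟩ := (blockEquiv q n).surjective k
    simp [interleave_blockSingle_blockEquiv, hw.coe_basis]
  · simp [piForm_blockSingle_blockSingle, hw.2.2.1]
  · simp [piForm_blockSingle_blockSingle, hw.2.2.2.1]
  · intro k l
    simp only [piForm_blockSingle_blockSingle, hw.2.2.2.2, ← ite_and, ← Prod.ext_iff,
      EmbeddingLike.apply_eq_iff_eq]

end PiForm

section AverageMap

variable {k G V : Type*} [Field k] [Group G] [Fintype G] [Invertible (Fintype.card G : k)]
  [AddCommGroup V] [Module k V] (ρ : Representation k G V)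

theorem averageMap_apply (x : V) :
    ρ.averageMap x = (Fintype.card G : k)⁻¹ • ∑ g, ρ g x := by
  simp [Representation.averageMap, GroupAlgebra.average, map_sum]

theorem averageMap_self_apply (g : G) (x : V) : ρ.averageMap (ρ g x) = ρ.averageMap x := by
  rw [averageMap_apply, averageMap_apply]
  congr 1
  exact Fintype.sum_equiv (Equiv.mulRight g) _ _ fun h => by simp

theorem apply_averageMap_averageMap (h : LinearMap.BilinForm k V)
    (hh : ∀ g x y, h (ρ g x) (ρ g y) = h x y) (x y : V) :
    h (ρ.averageMap x) (ρ.averageMap y) = h (ρ.averageMap x) y := by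
  have hterm (g : G) : h (ρ.averageMap x) (ρ g y) = h (ρ.averageMap x) y := by
    rw [← hh g (ρ.averageMap x) y, ρ.averageMap_invariant x g]
  have hcard : (Fintype.card G : k) ≠ 0 := Invertible.ne_zero _
  simp only [averageMap_apply ρ y, map_smul, map_sum, hterm, Finset.sum_const, Finset.card_univ,
    smul_eq_mul, nsmul_eq_mul, inv_mul_cancel_left₀ hcard]

end AverageMap

section TensorForm

variable {W U : Type*} [AddCommGroup W] [Module ℂ W] [AddCommGroup U] [Module ℝ U]
  {κ : LinearMap.BilinForm ℂ W} {σ : LinearMap.BilinForm ℝ U}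

theorem isAlt_tmul (hκ : κ.IsAlt) (hσ : ∀ x y, σ x y = σ y x) :
    (LinearMap.BilinForm.tmul κ σ).IsAlt := by
  have hskew (x y : W ⊗[ℝ] U) :
      LinearMap.BilinForm.tmul κ σ x y = -LinearMap.BilinForm.tmul κ σ y x := by
    induction x using TensorProduct.induction_on with
    | zero => simp
    | add x₁ x₂ h₁ h₂ => simp only [map_add, LinearMap.add_apply, h₁, h₂, neg_add]
    | tmul w u =>
      induction y using TensorProduct.induction_on with
      | zero => simp
      | add y₁ y₂ h₁ h₂ => simp only [map_add, LinearMap.add_apply, h₁, h₂, neg_add]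
      | tmul w' u' => simp [← hκ.neg_eq w w', hσ u u']
  exact fun x => self_eq_neg.1 (hskew x x)

variable {G : Type*} [Group G] (ρW : Representation ℂ G W) (ρU : Representation ℝ G U)

theorem isAlt_betaE (hκ : κ.IsAlt) (hσ : ∀ x y, σ x y = σ y x) : (betaE ρW ρU κ σ).IsAlt :=
  fun x => isAlt_tmul hκ hσ (x : W ⊗[ℝ] U)

/-- The diagonal action of `G` on `W ⊗[ℝ] U` as a complex representation, whose invariants are
`diagInvariantsC ρW ρU`. -/
noncomputable def diagRep : Representation ℂ G (W ⊗[ℝ] U) where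
  toFun g := TensorProduct.AlgebraTensorModule.map (ρW g) (ρU g)
  map_one' := by simp [TensorProduct.AlgebraTensorModule.map_one]
  map_mul' g h := by simp only [map_mul, TensorProduct.AlgebraTensorModule.map_mul]

theorem diagRep_apply (g : G) (x : W ⊗[ℝ] U) :
    diagRep ρW ρU g x = TensorProduct.map ((ρW g).restrictScalars ℝ) (ρU g) x :=
  rfl

theorem diagRep_tmul (g : G) (w : W) (x : U) :
    diagRep ρW ρU g (w ⊗ₜ[ℝ] x) = ρW g w ⊗ₜ[ℝ] ρU g x :=
  rfl

theorem tmul_diagRep_diagRep (hκ : ∀ g x y, κ (ρW g x) (ρW g y) = κ x y)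
    (hσ : ∀ g x y, σ (ρU g x) (ρU g y) = σ x y) (g : G) (x y : W ⊗[ℝ] U) :
    LinearMap.BilinForm.tmul κ σ (diagRep ρW ρU g x) (diagRep ρW ρU g y) =
      LinearMap.BilinForm.tmul κ σ x y := by
  induction x using TensorProduct.induction_on with
  | zero => simp
  | add x₁ x₂ h₁ h₂ => simp only [map_add, LinearMap.add_apply, h₁, h₂]
  | tmul w u =>
    induction y using TensorProduct.induction_on with
    | zero => simp
    | add y₁ y₂ h₁ h₂ => simp only [map_add, h₁, h₂]
    | tmul w' u' => simp [diagRep_tmul, hκ, hσ]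

end TensorForm

section AverageTensor

variable {G W U ι : Type*} [Group G] [Fintype G] [AddCommGroup W] [Module ℂ W] [AddCommGroup U]
  [Module ℝ U] [Fintype ι] (ρW : Representation ℂ G W) (ρU : Representation ℝ G U) (u : ι → U)

/-- The map `v ↦ |G|⁻¹ r_G (∑ i, v i ⊗ u i)` from `W^q` to the invariants of `W ⊗[ℝ] U`; it sends
the vector `w` in the `i`-th summand to `|G|⁻¹ r_G (w ⊗ u i)`. -/
noncomputable def averageTensor : (ι → W) →ₗ[ℂ] diagInvariantsC ρW ρU :=
  ((diagRep ρW ρU).averageMap ∘ₗ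
    ∑ i, (TensorProduct.AlgebraTensorModule.mk ℝ ℂ W U).flip (u i) ∘ₗ
      LinearMap.proj i).codRestrict _ fun _ => (diagRep ρW ρU).averageMap_invariant _

theorem coe_averageTensor (v : ι → W) :
    (averageTensor ρW ρU u v : W ⊗[ℝ] U) =
      (diagRep ρW ρU).averageMap (∑ i, v i ⊗ₜ[ℝ] u i) := by
  simp [averageTensor]

theorem coe_averageTensor_single [DecidableEq ι] (i : ι) (w : W) :
    (averageTensor ρW ρU u (Pi.single i w) : W ⊗[ℝ] U) =
      (diagRep ρW ρU).averageMap (w ⊗ₜ[ℝ] u i) := by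
  rw [coe_averageTensor, Finset.sum_eq_single_of_mem i (Finset.mem_univ i), Pi.single_eq_same]
  intro j _ hj
  rw [Pi.single_eq_of_ne hj, TensorProduct.zero_tmul]

theorem averageTensor_surjective
    (hu : Submodule.span ℝ (Set.range fun p : ι × G => ρU p.2 (u p.1)) = ⊤) :
    Function.Surjective (averageTensor ρW ρU u) := by
  classical
  have hgen (w : W) (i : ι) (g : G) :
      (diagRep ρW ρU).averageMap (w ⊗ₜ[ℝ] ρU g (u i)) =
        averageTensor ρW ρU u (Pi.single i (ρW g⁻¹ w)) := by
    rw [coe_averageTensor_single, ← averageMap_self_apply _ g (ρW g⁻¹ w ⊗ₜ[ℝ] u i), diagRep_tmul,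
      ρW.self_inv_apply]
  have hrange (x : W ⊗[ℝ] U) : (diagRep ρW ρU).averageMap x ∈
      (averageTensor ρW ρU u).range.map (diagInvariantsC ρW ρU).subtype := by
    induction x using TensorProduct.induction_on with
    | zero => simp only [map_zero, zero_mem]
    | add x y hx hy => simpa only [map_add] using add_mem hx hy
    | tmul w y =>
      have hy : y ∈ Submodule.span ℝ (Set.range fun p : ι × G => ρU p.2 (u p.1)) := hu ▸ trivial
      induction hy using Submodule.span_induction generalizing w with
      | mem _ h =>
        obtain ⟨⟨i, g⟩, rfl⟩ := h
        exact ⟨_, ⟨_, rfl⟩, (hgen w i g).symm⟩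
      | zero => simp only [TensorProduct.tmul_zero, map_zero, zero_mem]
      | add y z _ _ hy hz =>
        simpa only [TensorProduct.tmul_add, map_add] using add_mem (hy w) (hz w)
      | smul r y _ hy =>
        simpa only [TensorProduct.tmul_smul, TensorProduct.smul_tmul'] using hy (r • w)
  intro y
  obtain ⟨_, ⟨v, rfl⟩, hv⟩ := hrange y
  exact ⟨v, Subtype.ext (hv.trans ((diagRep ρW ρU).averageMap_id y y.2))⟩

/-- The endomorphism of `W^q` given by the matrix `(σ̃ (u i, u j))` over `ℝ[G]`, where
`σ̃ (x, y) = ∑ g, σ (g x, y) g⁻¹`. -/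
noncomputable def gramOperator (σ : LinearMap.BilinForm ℝ U) : (ι → W) →ₗ[ℂ] (ι → W) :=
  LinearMap.pi fun i => ∑ j, ∑ g : G, (σ (ρU g (u i)) (u j) : ℂ) • ρW g⁻¹ ∘ₗ LinearMap.proj j

theorem gramOperator_apply (σ : LinearMap.BilinForm ℝ U) (v : ι → W) (i : ι) :
    gramOperator ρW ρU u σ v i =
      ∑ j, ∑ g : G, (σ (ρU g (u i)) (u j) : ℂ) • ρW g⁻¹ (v j) := by
  simp [gramOperator]

variable {ρW ρU u} {σ : LinearMap.BilinForm ℝ U} {κ : LinearMap.BilinForm ℂ W}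

theorem betaE_averageTensor_averageTensor (hσsymm : ∀ x y, σ x y = σ y x)
    (hσ : ∀ g x y, σ (ρU g x) (ρU g y) = σ x y) (hκ : ∀ g x y, κ (ρW g x) (ρW g y) = κ x y)
    (x y : ι → W) :
    betaE ρW ρU κ σ (averageTensor ρW ρU u x) (averageTensor ρW ρU u y) =
      (Fintype.card G : ℂ)⁻¹ * piForm ι κ (gramOperator ρW ρU u σ x) y := by
  have hcoeff (g : G) (i j : ι) : σ (ρU g (u j)) (u i) = σ (ρU g⁻¹ (u i)) (u j) := by
    rw [hσsymm, ← hσ g⁻¹, ρU.inv_self_apply]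
  calc LinearMap.BilinForm.tmul κ σ (averageTensor ρW ρU u x) (averageTensor ρW ρU u y)
      = LinearMap.BilinForm.tmul κ σ ((diagRep ρW ρU).averageMap (∑ j, x j ⊗ₜ[ℝ] u j))
          (∑ i, y i ⊗ₜ[ℝ] u i) := by
        rw [coe_averageTensor, coe_averageTensor]
        exact apply_averageMap_averageMap _ _ (tmul_diagRep_diagRep ρW ρU hκ hσ) _ _
    _ = (Fintype.card G : ℂ)⁻¹ *
          ∑ i, ∑ j, ∑ g : G, (σ (ρU g⁻¹ (u i)) (u j) : ℂ) * κ (ρW g (x j)) (y i) := by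
        simp only [averageMap_apply, map_smul, LinearMap.smul_apply, smul_eq_mul]
        simp only [map_sum, LinearMap.sum_apply, diagRep_tmul,
          LinearMap.BilinForm.tensorDistrib_tmul]
        refine congrArg _ (Finset.sum_congr rfl fun i _ => Finset.sum_comm.trans ?_)
        exact Finset.sum_congr rfl fun j _ => Finset.sum_congr rfl fun g _ => by
          rw [hcoeff, Complex.real_smul]
    _ = (Fintype.card G : ℂ)⁻¹ * piForm ι κ (gramOperator ρW ρU u σ x) y := by
        simp only [piForm_apply, gramOperator_apply, map_sum, map_smul, LinearMap.sum_apply,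
          LinearMap.smul_apply, smul_eq_mul]
        congr! 3 with i _ j _
        exact Fintype.sum_equiv (Equiv.inv G) _ _ fun g => by simp

theorem piForm_gramOperator_left (hσsymm : ∀ x y, σ x y = σ y x)
    (hσ : ∀ g x y, σ (ρU g x) (ρU g y) = σ x y) (hκalt : κ.IsAlt)
    (hκ : ∀ g x y, κ (ρW g x) (ρW g y) = κ x y) (x y : ι → W) :
    piForm ι κ (gramOperator ρW ρU u σ x) y = piForm ι κ x (gramOperator ρW ρU u σ y) := by
  have hcard : (Fintype.card G : ℂ)⁻¹ ≠ 0 := inv_ne_zero (Nat.cast_ne_zero.2 Fintype.card_ne_zero)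
  have hβ := betaE_averageTensor_averageTensor (u := u) hσsymm hσ hκ
  refine mul_left_cancel₀ hcard ?_
  rw [← hβ, ← (isAlt_betaE ρW ρU hκalt hσsymm).neg_eq, hβ,
    ← (isAlt_piForm hκalt).neg_eq, mul_neg, neg_neg]

end AverageTensor

section Wedge

variable {G W U : Type*} [Group G] [Fintype G] [AddCommGroup W] [Module ℂ W] [AddCommGroup U]
  [Module ℝ U] (ρW : Representation ℂ G W) (ρU : Representation ℝ G U)

theorem prod_ι_average_eq_ιMulti {q n : ℕ} (u : Fin q → U) (w w' : Fin n → W) :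
    (List.ofFn fun i => (List.ofFn fun m => ExteriorAlgebra.ι ℂ ((Fintype.card G : ℂ)⁻¹ •
        ∑ g : G, TensorProduct.map ((ρW g).restrictScalars ℝ) (ρU g)
          (interleave w w' m ⊗ₜ[ℝ] u i))).prod).prod =
      (ExteriorAlgebra.ιMulti ℂ (2 * (q * n))).compLinearMap (diagInvariantsC ρW ρU).subtype
        (averageTensor ρW ρU u ∘ interleave (blockSingle q w) (blockSingle q w')) := by
  rw [prod_ofFn_blockEquiv fun p => ExteriorAlgebra.ι ℂ ((Fintype.card G : ℂ)⁻¹ •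
      ∑ g : G, TensorProduct.map ((ρW g).restrictScalars ℝ) (ρU g)
        (interleave w w' p.2 ⊗ₜ[ℝ] u p.1)),
    AlternatingMap.compLinearMap_apply, ExteriorAlgebra.ιMulti_apply]
  congr 2
  funext k
  obtain ⟨⟨i, m⟩, rfl⟩ := (blockEquiv q n).surjective k
  simp only [Function.comp_apply, Equiv.symm_apply_apply, interleave_blockSingle_blockEquiv,
    Submodule.subtype_apply, coe_averageTensor_single, averageMap_apply, diagRep_apply]

end Wedge

theorem pfaffian_of_average_basis_general {G W U : Type*} [Group G] [Fintype G]
    [AddCommGroup W] [Module ℂ W]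
    [AddCommGroup U] [Module ℝ U]
    (ρW : Representation ℂ G W) (ρU : Representation ℝ G U)
    {q : ℕ} (u : Fin q → U)
    (hspan : Submodule.span ℝ (Set.range fun p : Fin q × G => ρU p.2 (u p.1)) = ⊤)
    (σ : LinearMap.BilinForm ℝ U)
    (hσsymm : ∀ x y, σ x y = σ y x)
    (hσinv : ∀ (g : G) (x y : U), σ (ρU g x) (ρU g y) = σ x y)
    (κ : LinearMap.BilinForm ℂ W) (hκalt : LinearMap.IsAlt κ)
    (hκinv : ∀ (g : G) (x y : W), κ (ρW g x) (ρW g y) = κ x y)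
    {N : ℕ} (wb wb' : Fin N → W) (hw : IsHyperbolicBasis κ wb wb')
    (rGt : W ⊗[ℝ] U → W ⊗[ℝ] U)
    (hrG : ∀ x, rGt x = ∑ g : G,
      TensorProduct.map ((ρW g).restrictScalars ℝ) (ρU g) x)
    (T : (Fin q → W) → (Fin q → W))
    (hT : ∀ (v : Fin q → W) (i : Fin q),
      T v i = ∑ j : Fin q, ∑ g : G, ((σ (ρU g (u i)) (u j) : ℝ) : ℂ) • ρW g⁻¹ (v j))
    (B : (Fin q → W) ≃ₗ[ℂ] (Fin q → W))
    (hB : ∀ x y : Fin q → W,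
      (∑ i : Fin q, κ ((Fintype.card G : ℂ)⁻¹ • T x i) (y i))
        = ∑ i : Fin q, κ (B x i) (B y i)) :
    LinearMap.IsAlt (betaE ρW ρU κ σ) ∧
    LinearMap.BilinForm.Nondegenerate (betaE ρW ρU κ σ) ∧
    Module.finrank ℂ (diagInvariantsC ρW ρU) = 2 * (q * N) ∧
    (∀ v v' : Fin q → W,
      (∑ i : Fin q, κ (T v i) (v' i)) = ∑ i : Fin q, κ (v i) (T v' i)) ∧
    (∀ e e' : Fin (q * N) → (diagInvariantsC ρW ρU),
      IsHyperbolicBasis (betaE ρW ρU κ σ) e e' →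
      (List.ofFn (fun i : Fin q =>
          (List.ofFn (fun m : Fin (2 * N) =>
            ExteriorAlgebra.ι ℂ
              ((Fintype.card G : ℂ)⁻¹ • rGt ((interleave wb wb' m) ⊗ₜ[ℝ] u i)))).prod)).prod
        = LinearMap.det (B : (Fin q → W) →ₗ[ℂ] (Fin q → W)) •
          (List.ofFn (fun k : Fin (2 * (q * N)) =>
            ExteriorAlgebra.ι ℂ (↑(interleave e e' k) : W ⊗[ℝ] U))).prod) := by
  obtain rfl : T = gramOperator ρW ρU u σ :=
    funext₂ fun v i => (hT v i).trans (gramOperator_apply ρW ρU u σ v i).symm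
  have hβalt := isAlt_betaE ρW ρU hκalt hσsymm
  have hΦ (x y : Fin q → W) :
      betaE ρW ρU κ σ (averageTensor ρW ρU u x) (averageTensor ρW ρU u y) =
        piForm (Fin q) κ (B x) (B y) := by
    rw [betaE_averageTensor_averageTensor hσsymm hσinv hκinv, piForm_apply κ (B x), ← hB]
    simp [piForm_apply, Finset.mul_sum]
  obtain ⟨Ψ, hΨB, hΨ⟩ := exists_isometry_of_surjective
    ((hw.pi q).nondegenerate (isAlt_piForm hκalt)).1 (averageTensor_surjective ρW ρU u hspan) B hΦ
  have hE := (hw.pi q).map Ψ hΨ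
  refine ⟨hβalt, hE.nondegenerate hβalt, hE.finrank_eq, fun v v' => ?_, fun e e' he => ?_⟩
  · simpa only [piForm_apply] using piForm_gramOperator_left hσsymm hσinv hκalt hκinv v v'
  · simp only [hrG]
    exact (prod_ι_average_eq_ιMulti ρW ρU u wb wb').trans <|
      (congrArg _ (funext fun _ => (hΨB _).symm)).trans <|
      (hw.pi q).alternatingMap_isometry_comp hβalt he hΨ B
        ((ExteriorAlgebra.ιMulti ℂ _).compLinearMap (diagInvariantsC ρW ρU).subtype)

/-- Frölich's Pfaffian evaluation (Proposition 23 of Chinburg–Pappas–Taylor):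
the restriction `β` of `σ ⊗ κ` to `E = (U ⊗ W)^G` is a non-degenerate alternating form,
`dim_ℂ E = 2qN`, the endomorphism `T` of `W^q` given by the matrix `(σ̃(u i, u j))` is
self-adjoint for `κ^{(q)}`, and for any automorphism `B` of `W^q` expressing `|G|⁻¹ T`
as `B̂ B` and any hyperbolic basis `{e, e'}` of `(E, β)`, the wedge (in lexicographic
order) of the vectors `|G|⁻¹ r_G (u i ⊗ w n)` equals `det B` times the wedge of the
hyperbolic basis: `Pf_{(σ⊗κ)^G}(∧ |G|⁻¹ r_G(u i ⊗ w n)) = pf_{κ^{(q)}}(|G|⁻¹ T)`. -/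
theorem pfaffian_of_average_basis {G W U : Type*} [Group G] [Fintype G]
    [AddCommGroup W] [Module ℂ W] [FiniteDimensional ℂ W]
    [AddCommGroup U] [Module ℝ U]
    (ρW : Representation ℂ G W) (ρU : Representation ℝ G U)
    {q : ℕ} (u : Fin q → U)
    (hfree : LinearIndependent ℝ (fun p : Fin q × G => ρU p.2 (u p.1)) ∧
      Submodule.span ℝ (Set.range fun p : Fin q × G => ρU p.2 (u p.1)) = ⊤)
    (σ : LinearMap.BilinForm ℝ U)
    (hσsymm : ∀ x y, σ x y = σ y x)
    (hσnd : LinearMap.BilinForm.Nondegenerate σ)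
    (hσinv : ∀ (g : G) (x y : U), σ (ρU g x) (ρU g y) = σ x y)
    (κ : LinearMap.BilinForm ℂ W) (hκalt : LinearMap.IsAlt κ)
    (hκnd : LinearMap.BilinForm.Nondegenerate κ)
    (hκinv : ∀ (g : G) (x y : W), κ (ρW g x) (ρW g y) = κ x y)
    {N : ℕ} (wb wb' : Fin N → W) (hw : IsHyperbolicBasis κ wb wb')
    (rGt : W ⊗[ℝ] U → W ⊗[ℝ] U)
    (hrG : ∀ x, rGt x = ∑ g : G,
      TensorProduct.map ((ρW g).restrictScalars ℝ) (ρU g) x)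
    (T : (Fin q → W) → (Fin q → W))
    (hT : ∀ (v : Fin q → W) (i : Fin q),
      T v i = ∑ j : Fin q, ∑ g : G, ((σ (ρU g (u i)) (u j) : ℝ) : ℂ) • ρW g⁻¹ (v j))
    (B : (Fin q → W) ≃ₗ[ℂ] (Fin q → W))
    (hB : ∀ x y : Fin q → W,
      (∑ i : Fin q, κ ((Fintype.card G : ℂ)⁻¹ • T x i) (y i))
        = ∑ i : Fin q, κ (B x i) (B y i)) :
    LinearMap.IsAlt (betaE ρW ρU κ σ) ∧
    LinearMap.BilinForm.Nondegenerate (betaE ρW ρU κ σ) ∧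
    Module.finrank ℂ (diagInvariantsC ρW ρU) = 2 * (q * N) ∧
    (∀ v v' : Fin q → W,
      (∑ i : Fin q, κ (T v i) (v' i)) = ∑ i : Fin q, κ (v i) (T v' i)) ∧
    (∀ e e' : Fin (q * N) → (diagInvariantsC ρW ρU),
      IsHyperbolicBasis (betaE ρW ρU κ σ) e e' →
      (List.ofFn (fun i : Fin q =>
          (List.ofFn (fun m : Fin (2 * N) =>
            ExteriorAlgebra.ι ℂ
              ((Fintype.card G : ℂ)⁻¹ • rGt ((interleave wb wb' m) ⊗ₜ[ℝ] u i)))).prod)).prod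
        = LinearMap.det (B : (Fin q → W) →ₗ[ℂ] (Fin q → W)) •
          (List.ofFn (fun k : Fin (2 * (q * N)) =>
            ExteriorAlgebra.ι ℂ (↑(interleave e e' k) : W ⊗[ℝ] U))).prod) := by
  exact pfaffian_of_average_basis_general ρW ρU u hfree.2 σ hσsymm hσinv κ hκalt hκinv wb wb' hw
    rGt hrG T hT B hB
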